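/- Let a and b be relatively prime positive integers, and let n be an integer with 1 ≤ n ≤ a + b. Let a' and b' be any integers satisfying a·a' ≡ 1 (mod b) and b·b' ≡ 1 (mod a). Then rₙ(a, b) + rₙ(b, a) = n²/(2ab) − (n/2)·(1/a + 1/b + 1/(ab)) + (1/12)·(b/a + a/b + 1/(ab)) + (1/2)·( ((a'·n/b)) + ((b'·n/a)) + ((n/a)) + ((n/b)) ) + (1/4)·(1 + χ_a(n) + χ_b(n)), where χ_m(n) = 1 if m divides n and χ_m(n) = 0 otherwise. -/

import Mathlib

/-- The sawtooth function `((x))`: equal to `x - ⌊x⌋ - 1/2` if `x` is not an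
integer, and `0` if `x` is an integer. -/
def sawtooth (x : ℚ) : ℚ := if Int.fract x = 0 then 0 else Int.fract x - 1/2

/-- The Dedekind–Rademacher sum `rₙ(a,b) = ∑_{k=0}^{b-1} (((k·a+n)/b)) ((k/b))`. -/
def rademacherSum (n : ℕ) (a : ℤ) (b : ℕ) : ℚ :=
  ∑ k ∈ Finset.range b, sawtooth (((k : ℚ) * a + n) / b) * sawtooth ((k : ℚ) / b)

/-! When `n` grows by one, the left-hand side changes by half the sum of the values of
`((a'n/b)) + ((b'n/a))` at `n` and `n + 1`. Popoviciu's formula evaluates such a value in terms of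
the number of solutions of `a * x + b * y = n` in positive integers, and there are none for
`n < a + b`. The starting value `n = 0` is Dedekind's reciprocity law; it holds because
`((u)) + ((v)) - ((u + v))` is `1/2` or `-1/2` unless `u`, `v` or `u + v` is an integer, so that the
sum of its squares over all `u = x / b` and `v = y / a` is known. -/

open Finset

section FiniteSums

variable {K : Type*} [Field K] [CharZero K]

lemma sum_range_cast_id (n : ℕ) : ∑ k ∈ range n, (k : K) = n * (n - 1) / 2 := by
  induction n with
  | zero => simp
  | succ n ih => rw [sum_range_succ, ih]; push_cast; ring

lemma sum_range_cast_sq (n : ℕ) :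
    ∑ k ∈ range n, (k : K) ^ 2 = n * (n - 1) * (2 * n - 1) / 6 := by
  induction n with
  | zero => simp
  | succ n ih => rw [sum_range_succ, ih]; push_cast; ring

lemma periodic_sum_range_comp_add_div {M : Type*} [AddCancelCommMonoid M] {F : K → M}
    (hF : Function.Periodic F 1) {a : ℕ} (ha : 0 < a) :
    Function.Periodic (fun z ↦ ∑ y ∈ range a, F (z + y / a)) (1 / a) := by
  intro z
  have ha0 : (a : K) ≠ 0 := Nat.cast_ne_zero.2 ha.ne'
  have hshift (y : ℕ) : F (z + 1 / a + y / a) = F (z + (y + 1 : ℕ) / a) := by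
    congr 1; push_cast; ring
  have htop : F (z + a / a) = F (z + (0 : ℕ) / a) := by simp [div_self ha0, hF z]
  simp only [hshift]
  rw [← add_left_inj (F (z + (0 : ℕ) / a)), ← sum_range_succ' (fun y ↦ F (z + y / a)),
    sum_range_succ, htop]

lemma map_eq_of_periodic_of_modEq {M : Type*} {F : ℤ → M} {b m m' : ℤ}
    (hF : Function.Periodic F b) (h : m ≡ m' [ZMOD b]) : F m = F m' := by
  obtain ⟨k, hk⟩ := h.dvd
  rw [← hF.int_mul k m]
  congr 1
  linear_combination -hk

lemma sum_range_ite_modEq {M : Type*} [AddCommMonoid M] {F : ℤ → M} {b : ℕ} (hb : 0 < b)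
    (hF : Function.Periodic F b) (c : ℤ) :
    ∑ k ∈ range b, (if (k : ℤ) ≡ c [ZMOD b] then F k else 0) = F c := by
  have hbz : (0 : ℤ) < b := by exact_mod_cast hb
  obtain ⟨r, hr⟩ := Int.eq_ofNat_of_zero_le (Int.emod_nonneg c hbz.ne')
  have hrb : r < b := by exact_mod_cast hr ▸ Int.emod_lt_of_pos c hbz
  have hrc : (r : ℤ) ≡ c [ZMOD b] := hr ▸ Int.mod_modEq c b
  rw [sum_eq_single_of_mem r (mem_range.2 hrb), if_pos hrc, map_eq_of_periodic_of_modEq hF hrc]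
  intro k hk hkr
  refine if_neg fun hkc ↦ hkr ?_
  exact (Int.natCast_modEq_iff.1 (hkc.trans hrc.symm)).eq_of_lt_of_lt (mem_range.1 hk) hrb

lemma sum_range_sum_range_mul_add_mul {M : Type*} [AddCommMonoid M] {F : ℕ → M} {a b : ℕ}
    (hab : a.Coprime b) (hF : Function.Periodic F (a * b)) :
    ∑ x ∈ range b, ∑ y ∈ range a, F (a * x + b * y) = ∑ r ∈ range (a * b), F r := by
  have hmaps : Set.MapsTo (fun p : ℕ × ℕ ↦ (a * p.1 + b * p.2) % (a * b))
      (range b ×ˢ range a : Finset _) (range (a * b)) := by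
    rintro ⟨x, y⟩ hxy
    simp only [coe_product, coe_range, Set.mem_prod, Set.mem_Iio] at hxy ⊢
    exact Nat.mod_lt _ (Nat.mul_pos (Nat.zero_lt_of_lt hxy.2) (Nat.zero_lt_of_lt hxy.1))
  have hinj : Set.InjOn (fun p : ℕ × ℕ ↦ (a * p.1 + b * p.2) % (a * b))
      (range b ×ˢ range a : Finset _) := by
    rintro ⟨x, y⟩ hxy ⟨x', y'⟩ hxy' (h : a * x + b * y ≡ a * x' + b * y' [MOD a * b])
    simp only [coe_product, coe_range, Set.mem_prod, Set.mem_Iio] at hxy hxy'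
    have hx : a * x ≡ a * x' [MOD b] := by simpa [Nat.ModEq] using h.of_mul_left a
    have hy : b * y ≡ b * y' [MOD a] := by simpa [Nat.ModEq] using h.of_mul_right b
    exact Prod.ext
      ((hx.cancel_left_of_coprime hab.symm).eq_of_lt_of_lt hxy.1 hxy'.1)
      ((hy.cancel_left_of_coprime hab).eq_of_lt_of_lt hxy.2 hxy'.2)
  rw [← sum_product']
  refine sum_nbij _ hmaps hinj (surjOn_of_injOn_of_card_le _ hmaps hinj ?_)
    fun p _ ↦ (hF.map_mod_nat _).symm
  rw [card_product, card_range, card_range, card_range, Nat.mul_comm]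

end FiniteSums

section Sawtooth

lemma sawtooth_eq_fract (x : ℚ) :
    sawtooth x = Int.fract x - 1 / 2 + if Int.fract x = 0 then 1 / 2 else 0 := by
  unfold sawtooth
  split_ifs with h <;> simp [h]

lemma sawtooth_eq_of_mem_Ico {x : ℚ} (hx : x ∈ Set.Ico 0 1) :
    sawtooth x = x - 1 / 2 + if x = 0 then 1 / 2 else 0 := by
  rw [sawtooth_eq_fract, Int.fract_eq_self.2 hx]

@[simp]
lemma sawtooth_zero : sawtooth 0 = 0 := by simp [sawtooth]

lemma sawtooth_add_intCast (x : ℚ) (m : ℤ) : sawtooth (x + m) = sawtooth x := by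
  simp only [sawtooth, Int.fract_add_intCast]

lemma sawtooth_neg (x : ℚ) : sawtooth (-x) = -sawtooth x := by
  unfold sawtooth
  by_cases hx : Int.fract x = 0
  · simp [hx, Int.fract_neg_eq_zero.2 hx]
  · rw [if_neg hx, if_neg (mt Int.fract_neg_eq_zero.1 hx), Int.fract_neg hx]
    ring

lemma sq_sawtooth_add_sawtooth_sub_sawtooth_add {u v : ℚ} (hu : Int.fract u ≠ 0)
    (hv : Int.fract v ≠ 0) (huv : Int.fract (u + v) ≠ 0) :
    (sawtooth u + sawtooth v - sawtooth (u + v)) ^ 2 = 1 / 4 := by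
  obtain ⟨z, hz⟩ := Int.fract_add u v
  have hz_lt : (z : ℚ) < 1 := by
    linarith [Int.fract_nonneg u, Int.fract_nonneg v, Int.fract_lt_one (u + v)]
  have hz_gt : (-2 : ℚ) < z := by
    linarith [Int.fract_lt_one u, Int.fract_lt_one v, Int.fract_nonneg (u + v)]
  have hz_cases : z = 0 ∨ z = -1 := by
    have : z < 1 := by exact_mod_cast hz_lt
    have : -2 < z := by exact_mod_cast hz_gt
    omega
  have hdefect : sawtooth u + sawtooth v - sawtooth (u + v) = -z - 1 / 2 := by
    simp only [sawtooth, if_neg hu, if_neg hv, if_neg huv]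
    linear_combination -hz
  rcases hz_cases with rfl | rfl <;> rw [hdefect] <;> norm_num

lemma sum_range_sawtooth_add_div {a : ℕ} (ha : 0 < a) (z : ℚ) :
    ∑ y ∈ range a, sawtooth (z + y / a) = sawtooth (a * z) := by
  -- Both sides have period `1 / a` in `z`, so it suffices to treat `z = t / a` with `0 ≤ t < 1`.
  have ha0 : (0 : ℚ) < a := by exact_mod_cast ha
  have hper : Function.Periodic sawtooth 1 := fun x ↦ by simpa using sawtooth_add_intCast x 1
  set t := Int.fract (a * z) with ht
  have ht0 : 0 ≤ t := Int.fract_nonneg _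
  have ht1 : t < 1 := Int.fract_lt_one _
  have hz : t / a = z - ⌊a * z⌋ * (1 / a) := by
    rw [ht, Int.fract]; field_simp
  have hterm (y : ℕ) (hy : y ∈ range a) : sawtooth (t / a + y / a) =
      (t + y) / a - 1 / 2 + if y = 0 then (if t = 0 then 1 / 2 else 0) else 0 := by
    have hya : (y : ℚ) + 1 ≤ a := by exact_mod_cast mem_range.1 hy
    have hzero : (t + y) / a = 0 ↔ y = 0 ∧ t = 0 := by
      rw [div_eq_zero_iff, or_iff_left ha0.ne', add_eq_zero_iff_of_nonneg ht0 (Nat.cast_nonneg y),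
        Nat.cast_eq_zero, and_comm]
    rw [← add_div, sawtooth_eq_of_mem_Ico ⟨by positivity, by rw [div_lt_one ha0]; linarith⟩,
      if_congr hzero rfl rfl, ite_and]
  calc ∑ y ∈ range a, sawtooth (z + y / a)
      = ∑ y ∈ range a, sawtooth (t / a + y / a) := by
        rw [hz]
        exact ((periodic_sum_range_comp_add_div hper ha).sub_int_mul_eq _).symm
    _ = t - 1 / 2 + if t = 0 then 1 / 2 else 0 := by
        rw [sum_congr rfl hterm, sum_add_distrib, sum_sub_distrib, ← sum_div, sum_add_distrib,
          sum_range_cast_id, sum_ite_eq', if_pos (mem_range.2 ha)]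
        simp only [sum_const, card_range, nsmul_eq_mul]
        field_simp
        ring
    _ = sawtooth (a * z) := (sawtooth_eq_fract _).symm

lemma sum_range_sawtooth_div (b : ℕ) : ∑ k ∈ range b, sawtooth (k / b) = 0 := by
  obtain rfl | hb := b.eq_zero_or_pos
  · simp
  · simpa using sum_range_sawtooth_add_div hb 0

lemma sum_range_sawtooth_div_sq {b : ℕ} (hb : 0 < b) :
    ∑ k ∈ range b, sawtooth (k / b) ^ 2 = ((b : ℚ) - 1) * (b - 2) / (12 * b) := by
  have hb0 : (0 : ℚ) < b := by exact_mod_cast hb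
  have hterm (k : ℕ) (hk : k ∈ range b) : sawtooth (k / b) ^ 2 =
      1 / b ^ 2 * (k : ℚ) ^ 2 - 1 / b * k + 1 / 4 - if k = 0 then 1 / 4 else 0 := by
    have hkb : (k : ℚ) < b := by exact_mod_cast mem_range.1 hk
    rw [sawtooth_eq_of_mem_Ico ⟨by positivity, (div_lt_one hb0).2 hkb⟩]
    obtain rfl | hk0 := eq_or_ne k 0
    · norm_num
    · rw [if_neg hk0, if_neg (div_ne_zero (Nat.cast_ne_zero.2 hk0) hb0.ne')]
      ring
  rw [sum_congr rfl hterm, sum_sub_distrib, sum_add_distrib, sum_sub_distrib, ← mul_sum, ← mul_sum,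
    sum_range_cast_id, sum_range_cast_sq, sum_ite_eq', if_pos (mem_range.2 hb)]
  simp only [sum_const, card_range, nsmul_eq_mul]
  field_simp
  ring

end Sawtooth

section Dedekind

lemma fract_natCast_div_eq_zero_iff {K : Type*} [Field K] [LinearOrder K] [IsStrictOrderedRing K]
    [FloorRing K] {b : ℕ} (hb : 0 < b) (m : ℕ) :
    Int.fract ((m : K) / b) = 0 ↔ b ∣ m := by
  rw [Int.fract_div_natCast_eq_div_natCast_mod, div_eq_zero_iff,
    or_iff_left (Nat.cast_ne_zero.2 hb.ne'), Nat.cast_eq_zero, Nat.dvd_iff_mod_eq_zero]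

variable {a b : ℕ}

lemma rademacherSum_zero_eq_sum_sum (ha : 0 < a) (b : ℕ) :
    rademacherSum 0 a b = ∑ x ∈ range b, ∑ y ∈ range a,
      sawtooth (x / b + y / a) * sawtooth (x / b) := by
  refine sum_congr rfl fun x _ ↦ ?_
  rw [← sum_mul, sum_range_sawtooth_add_div ha]
  congr 2
  push_cast
  ring

lemma sum_sum_sawtooth_add_sq (ha : 0 < a) (hb : 0 < b) (hab : a.Coprime b) :
    ∑ x ∈ range b, ∑ y ∈ range a, sawtooth (x / b + y / a) ^ 2 =
      ((a : ℚ) * b - 1) * (a * b - 2) / (12 * (a * b)) := by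
  have hper : Function.Periodic (fun r : ℕ ↦ sawtooth (r / (a * b : ℕ)) ^ 2) (a * b) := by
    intro r
    have hr : ((r + a * b : ℕ) : ℚ) / (a * b : ℕ) = r / (a * b : ℕ) + (1 : ℤ) := by
      push_cast; field_simp
    simp only [hr, sawtooth_add_intCast]
  have hterm (x y : ℕ) : (x : ℚ) / b + y / a = (a * x + b * y : ℕ) / (a * b : ℕ) := by
    push_cast; field_simp
  simp only [hterm]
  rw [sum_range_sum_range_mul_add_mul hab hper, sum_range_sawtooth_div_sq (Nat.mul_pos ha hb)]
  push_cast
  rfl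

lemma sq_sawtooth_div_add_sawtooth_div_sub (hab : a.Coprime b) {x y : ℕ} (hx : x < b)
    (hy : y < a) :
    (sawtooth (x / b) + sawtooth (y / a) - sawtooth (x / b + y / a)) ^ 2 =
      (if x = 0 then 0 else 1) * (if y = 0 then 0 else 1) / 4 := by
  have hb : 0 < b := Nat.zero_lt_of_lt hx
  have ha : 0 < a := Nat.zero_lt_of_lt hy
  obtain rfl | hx0 := Nat.eq_zero_or_pos x
  · simp
  obtain rfl | hy0 := Nat.eq_zero_or_pos y
  · simp
  have hbx : ¬ b ∣ x := Nat.not_dvd_of_pos_of_lt hx0 hx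
  have hay : ¬ a ∣ y := Nat.not_dvd_of_pos_of_lt hy0 hy
  have hadd : (x : ℚ) / b + y / a = (a * x + b * y : ℕ) / (a * b : ℕ) := by
    push_cast; field_simp
  have hnotDvd : ¬ a * b ∣ a * x + b * y := fun h ↦
    hbx <| hab.symm.dvd_of_dvd_mul_left <|
      (Nat.dvd_add_left (dvd_mul_right b y)).1 ((dvd_mul_left b a).trans h)
  rw [sq_sawtooth_add_sawtooth_sub_sawtooth_add, if_neg hx0.ne', if_neg hy0.ne', one_mul]
  · rwa [Ne, fract_natCast_div_eq_zero_iff hb]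
  · rwa [Ne, fract_natCast_div_eq_zero_iff ha]
  · rwa [hadd, Ne, fract_natCast_div_eq_zero_iff (Nat.mul_pos ha hb)]

lemma sum_sum_sq_sawtooth_div_add_sawtooth_div_sub (ha : 0 < a) (hb : 0 < b) (hab : a.Coprime b) :
    ∑ x ∈ range b, ∑ y ∈ range a,
        (sawtooth (x / b) + sawtooth (y / a) - sawtooth (x / b + y / a)) ^ 2 =
      ((b : ℚ) - 1) * (a - 1) / 4 := by
  have hcount {m : ℕ} (hm : 0 < m) : ∑ k ∈ range m, (if k = 0 then 0 else 1 : ℚ) = m - 1 := by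
    obtain ⟨m, rfl⟩ := Nat.exists_eq_add_of_lt hm
    simp [sum_range_succ']
  rw [sum_congr rfl fun x hx ↦ sum_congr rfl fun y hy ↦
    sq_sawtooth_div_add_sawtooth_div_sub hab (mem_range.1 hx) (mem_range.1 hy)]
  simp only [← sum_div]
  rw [← sum_mul_sum, hcount hb, hcount ha]

theorem dedekindSum_reciprocity (ha : 0 < a) (hb : 0 < b) (hab : a.Coprime b) :
    rademacherSum 0 a b + rademacherSum 0 b a =
      1 / 12 * ((b : ℚ) / a + a / b + 1 / (a * b)) - 1 / 4 := by
  have hswap : rademacherSum 0 b a = ∑ x ∈ range b, ∑ y ∈ range a,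
      sawtooth (x / b + y / a) * sawtooth (y / a) := by
    rw [rademacherSum_zero_eq_sum_sum hb, sum_comm]
    simp only [add_comm]
  have hsum : rademacherSum 0 a b + rademacherSum 0 b a =
      (∑ x ∈ range b, ∑ y ∈ range a, (sawtooth (x / b) ^ 2 + sawtooth (y / a) ^ 2
        + sawtooth (x / b + y / a) ^ 2 + 2 * (sawtooth (x / b) * sawtooth (y / a))
        - (sawtooth (x / b) + sawtooth (y / a) - sawtooth (x / b + y / a)) ^ 2)) / 2 := by
    rw [rademacherSum_zero_eq_sum_sum ha, hswap]
    simp only [← sum_add_distrib, sum_div]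
    refine sum_congr rfl fun x _ ↦ sum_congr rfl fun y _ ↦ ?_
    ring
  rw [hsum]
  simp only [sum_sub_distrib, sum_add_distrib, ← mul_sum, sum_const, card_range, nsmul_eq_mul]
  rw [sum_sum_sawtooth_add_sq ha hb hab,
    sum_sum_sq_sawtooth_div_add_sawtooth_div_sub ha hb hab, ← sum_mul,
    sum_range_sawtooth_div_sq hb, sum_range_sawtooth_div_sq ha, sum_range_sawtooth_div]
  field_simp
  ring

end Dedekind

section Increments

/-- The indicator `χ_m(n)` of the multiples of `m`, as a rational number. -/
def dvdIndicator (m : ℕ) (n : ℤ) : ℚ := if (m : ℤ) ∣ n then 1 else 0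

lemma dvdIndicator_neg (m : ℕ) (n : ℤ) : dvdIndicator m (-n) = dvdIndicator m n := by
  simp only [dvdIndicator, dvd_neg]

variable {b : ℕ}

lemma periodic_sawtooth_div (hb : 0 < b) :
    Function.Periodic (fun m : ℤ ↦ sawtooth (m / b)) b := by
  intro m
  have hm : ((m + b : ℤ) : ℚ) / b = m / b + (1 : ℤ) := by push_cast; field_simp
  simp only [hm, sawtooth_add_intCast]

lemma sawtooth_div_eq_of_modEq_of_lt {m r : ℤ} (h : m ≡ r [ZMOD b]) (hr0 : 0 ≤ r) (hrb : r < b) :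
    sawtooth (m / b) = r / b - 1 / 2 + dvdIndicator b m / 2 := by
  have hb : (0 : ℚ) < b := by exact_mod_cast hr0.trans_lt hrb
  have hzero : (r : ℚ) / b = 0 ↔ (b : ℤ) ∣ m := by
    rw [h.dvd_iff, div_eq_zero_iff, or_iff_left hb.ne', Int.cast_eq_zero,
      Int.dvd_iff_emod_eq_zero, Int.emod_eq_of_lt hr0 hrb]
  rw [map_eq_of_periodic_of_modEq (periodic_sawtooth_div (Nat.cast_pos.1 hb)) h,
    sawtooth_eq_of_mem_Ico ⟨by positivity, (div_lt_one hb).2 (by exact_mod_cast hrb)⟩,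
    if_congr hzero rfl rfl, dvdIndicator]
  split_ifs <;> ring

lemma sawtooth_div_eq_of_modEq_of_le {m r : ℤ} (h : m ≡ r [ZMOD b]) (hr0 : 0 < r) (hrb : r ≤ b) :
    sawtooth (m / b) = r / b - 1 / 2 - dvdIndicator b m / 2 := by
  have hb : (b : ℚ) ≠ 0 := by exact_mod_cast (hr0.trans_le hrb).ne'
  have hneg : -m ≡ b - r [ZMOD b] := by simpa [Int.ModEq] using h.neg
  have hrefl := sawtooth_div_eq_of_modEq_of_lt hneg (by omega) (by omega)
  rw [dvdIndicator_neg, Int.cast_neg, neg_div, sawtooth_neg, Int.cast_sub, sub_div,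
    Int.cast_natCast, div_self hb] at hrefl
  linear_combination -hrefl

lemma sawtooth_succ_div (hb : 0 < b) (m : ℤ) :
    sawtooth ((m + 1) / b) =
      sawtooth (m / b) + 1 / b - dvdIndicator b m / 2 - dvdIndicator b (m + 1) / 2 := by
  have hbz : (0 : ℤ) < b := by exact_mod_cast hb
  have hmod : m ≡ m % b [ZMOD b] := (Int.mod_modEq m b).symm
  have hr0 : 0 ≤ m % b := Int.emod_nonneg m hbz.ne'
  have hrb : m % b < b := Int.emod_lt_of_pos m hbz
  have hm := sawtooth_div_eq_of_modEq_of_lt hmod hr0 hrb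
  have hm_succ := sawtooth_div_eq_of_modEq_of_le (hmod.add_right 1) (by omega) (by omega)
  push_cast at hm_succ
  linear_combination hm_succ - hm

lemma dvd_mul_add_iff_modEq_neg_mul {a a' b : ℤ} (ha' : a * a' ≡ 1 [ZMOD b]) (k n : ℤ) :
    b ∣ k * a + n ↔ k ≡ -(a' * n) [ZMOD b] := by
  obtain ⟨c, hc⟩ := ha'.dvd
  rw [Int.modEq_iff_dvd]
  constructor <;> rintro ⟨d, hd⟩
  · exact ⟨-(a' * d + c * k), by linear_combination -a' * hd - k * hc⟩
  · exact ⟨c * n - a * d, by linear_combination -a * hd + n * hc⟩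

lemma sum_range_dvdIndicator_mul_sawtooth {a a' : ℤ} (hb : 0 < b) (ha' : a * a' ≡ 1 [ZMOD b])
    (n : ℤ) :
    ∑ k ∈ range b, dvdIndicator b (k * a + n) * sawtooth (k / b) = -sawtooth (a' * n / b) := by
  have hcollapse := sum_range_ite_modEq hb (periodic_sawtooth_div hb) (-(a' * n))
  rw [Int.cast_neg, neg_div, sawtooth_neg, Int.cast_mul] at hcollapse
  simpa only [dvdIndicator, dvd_mul_add_iff_modEq_neg_mul ha', ite_mul, one_mul, zero_mul,
    Int.cast_natCast] using hcollapse

lemma rademacherSum_succ {a a' : ℤ} (hb : 0 < b) (ha' : a * a' ≡ 1 [ZMOD b]) (n : ℕ) :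
    rademacherSum (n + 1) a b =
      rademacherSum n a b + (sawtooth (a' * n / b) + sawtooth (a' * (n + 1) / b)) / 2 := by
  have hterm (k : ℕ) : sawtooth ((k * a + (n + 1 : ℕ)) / b) * sawtooth (k / b) =
      sawtooth ((k * a + n) / b) * sawtooth (k / b) + 1 / b * sawtooth (k / b)
        - 1 / 2 * (dvdIndicator b (k * a + n) * sawtooth (k / b))
        - 1 / 2 * (dvdIndicator b (k * a + (n + 1 : ℤ)) * sawtooth (k / b)) := by
    have hstep := sawtooth_succ_div hb (k * a + n)
    push_cast at hstep ⊢
    rw [← add_assoc, ← add_assoc, hstep]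
    ring
  simp only [rademacherSum, hterm]
  rw [sum_sub_distrib, sum_sub_distrib, sum_add_distrib, ← mul_sum, ← mul_sum, ← mul_sum,
    sum_range_sawtooth_div, sum_range_dvdIndicator_mul_sawtooth hb ha',
    sum_range_dvdIndicator_mul_sawtooth hb ha']
  push_cast
  ring

end Increments

section Popoviciu

/-- The number of representations of `n` as `a * x + b * y` with `x` and `y` positive integers.
For positive `a` and `b` there are finitely many, so `Set.ncard` does not take its junk value. -/
noncomputable def posRepCount (a b n : ℕ) : ℕ :=
  {p : ℕ × ℕ | 0 < p.1 ∧ 0 < p.2 ∧ a * p.1 + b * p.2 = n}.ncard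

variable {a b : ℕ}

lemma posRepCount_eq_zero {n : ℕ} (hn : n < a + b) : posRepCount a b n = 0 := by
  have hempty : {p : ℕ × ℕ | 0 < p.1 ∧ 0 < p.2 ∧ a * p.1 + b * p.2 = n} = ∅ := by
    refine Set.eq_empty_of_forall_notMem fun p ⟨hx, hy, hxy⟩ ↦ hn.not_ge ?_
    rw [← hxy]
    exact Nat.add_le_add (Nat.le_mul_of_pos_right a hx) (Nat.le_mul_of_pos_right b hy)
  rw [posRepCount, hempty, Set.ncard_empty]

lemma exists_eq_add_mul_of_add_eq (hab : a.Coprime b) {N x₀ y₀ x y : ℕ} (hx₀ : x₀ ≤ b)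
    (hy₀ : y₀ ≤ a) (hx : 0 < x) (hy : 0 < y)
    (h : a * x₀ + b * y₀ + N * (a * b) = a * x + b * y + a * b) :
    ∃ i < N, x = x₀ + b * i ∧ y = y₀ + a * (N - 1 - i) := by
  zify at h hx₀ hy₀ hx hy
  obtain ⟨k, hk⟩ : (b : ℤ) ∣ x - x₀ :=
    (Nat.isCoprime_iff_coprime.2 hab.symm).dvd_of_dvd_mul_left
      ⟨y₀ - y + (N - 1) * a, by linear_combination -h⟩
  have hb0 : (0 : ℤ) < b := by
    refine lt_of_le_of_ne (Int.natCast_nonneg b) fun hb ↦ ?_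
    rw [← hb] at hk hx₀
    omega
  have hy_eq : (y : ℤ) = y₀ + a * (N - 1 - k) :=
    mul_left_cancel₀ hb0.ne' (by linear_combination -h - a * hk)
  have hk0 : -1 < k := lt_of_mul_lt_mul_left (by linarith) hb0.le
  have hkN : -1 < N - 1 - k := lt_of_mul_lt_mul_left (by linarith) (Int.natCast_nonneg a)
  lift k to ℕ using by omega
  refine ⟨k, by omega, by zify; linarith, ?_⟩
  rw [Nat.sub_sub]
  zify [show 1 + k ≤ N by omega]
  linear_combination hy_eq

lemma posRepCount_eq_of_add_eq (hab : a.Coprime b) {n N x₀ y₀ : ℕ} (hx₀ : x₀ ∈ Set.Ioc 0 b)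
    (hy₀ : y₀ ∈ Set.Ioc 0 a) (h : a * x₀ + b * y₀ + N * (a * b) = n + a * b) :
    posRepCount a b n = N := by
  have hset : {p : ℕ × ℕ | 0 < p.1 ∧ 0 < p.2 ∧ a * p.1 + b * p.2 = n} =
      (fun i ↦ (x₀ + b * i, y₀ + a * (N - 1 - i))) '' (range N : Set ℕ) := by
    ext ⟨x, y⟩
    simp only [Set.mem_ofPred_eq, coe_range, Set.mem_image, Set.mem_Iio, Prod.mk.injEq]
    constructor
    · rintro ⟨hx, hy, rfl⟩
      obtain ⟨i, hi, rfl, rfl⟩ := exists_eq_add_mul_of_add_eq hab hx₀.2 hy₀.2 hx hy h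
      exact ⟨i, hi, rfl, rfl⟩
    · rintro ⟨i, hi, rfl, rfl⟩
      obtain ⟨j, rfl⟩ := Nat.exists_eq_add_of_lt hi
      refine ⟨Nat.add_pos_left hx₀.1 _, Nat.add_pos_left hy₀.1 _, ?_⟩
      rw [show i + j + 1 - 1 - i = j by omega]
      linarith
  have hinj : Function.Injective fun i ↦ (x₀ + b * i, y₀ + a * (N - 1 - i)) := fun i j hij ↦
    Nat.eq_of_mul_eq_mul_left (hx₀.1.trans_le hx₀.2)
      (Nat.add_left_cancel (Prod.ext_iff.1 hij).1)
  rw [posRepCount, hset, Set.ncard_image_of_injective _ hinj, Set.ncard_coe_finset, card_range]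

lemma exists_mem_Ioc_modEq (hb : 0 < b) (m : ℤ) : ∃ r ∈ Set.Ioc 0 b, m ≡ r [ZMOD b] := by
  have hbz : (0 : ℤ) < b := by exact_mod_cast hb
  refine ⟨((m - 1) % b).toNat + 1, ⟨by omega, ?_⟩, ?_⟩
  · have := Int.emod_lt_of_pos (m - 1) hbz
    omega
  · rw [Nat.cast_add_one, Int.toNat_of_nonneg (Int.emod_nonneg _ hbz.ne')]
    simpa using ((Int.mod_modEq (m - 1) b).symm.add_right 1)

lemma exists_add_mul_eq_add (hab : a.Coprime b) {n x₀ y₀ : ℕ} (hn : 0 < n) (hx₀ : x₀ ≤ b)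
    (hy₀ : y₀ ≤ a) (hx₀n : (a : ℤ) * x₀ ≡ n [ZMOD b]) (hy₀n : (b : ℤ) * y₀ ≡ n [ZMOD a]) :
    ∃ N : ℕ, a * x₀ + b * y₀ + N * (a * b) = n + a * b := by
  have hdvd_b : (b : ℤ) ∣ n - (a * x₀ + b * y₀) := by
    rw [← sub_sub]; exact hx₀n.dvd.sub (dvd_mul_right _ _)
  have hdvd_a : (a : ℤ) ∣ n - (a * x₀ + b * y₀) := by
    rw [sub_add_eq_sub_sub_swap]; exact hy₀n.dvd.sub (dvd_mul_right _ _)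
  obtain ⟨t, ht⟩ := (Nat.isCoprime_iff_coprime.2 hab).mul_dvd hdvd_a hdvd_b
  have hx_le : a * x₀ ≤ a * b := Nat.mul_le_mul_left a hx₀
  have hy_le : b * y₀ ≤ a * b := Nat.mul_comm a b ▸ Nat.mul_le_mul_left b hy₀
  zify at hn hx_le hy_le
  have ht_gt : -2 < t := lt_of_mul_lt_mul_left (by linarith) (by positivity : (0 : ℤ) ≤ a * b)
  refine ⟨(t + 1).toNat, ?_⟩
  zify
  rw [Int.toNat_of_nonneg (by omega)]
  linear_combination -ht

lemma isCoprime_right_of_mul_modEq_one {a a' b : ℤ} (ha' : a * a' ≡ 1 [ZMOD b]) :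
    IsCoprime b a' := by
  obtain ⟨c, hc⟩ := ha'.dvd
  exact ⟨c, a, by linear_combination -hc⟩

lemma dvdIndicator_mul_of_isCoprime {m : ℕ} {c : ℤ} (h : IsCoprime (m : ℤ) c) (n : ℤ) :
    dvdIndicator m (c * n) = dvdIndicator m n := by
  have hdvd : (m : ℤ) ∣ c * n ↔ (m : ℤ) ∣ n := ⟨h.dvd_of_dvd_mul_left, (Dvd.dvd.mul_left · c)⟩
  simp only [dvdIndicator, hdvd]

lemma exists_representative_mul_inv (hb : 0 < b) {a' : ℤ} (ha' : (a : ℤ) * a' ≡ 1 [ZMOD b])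
    (n : ℕ) :
    ∃ r ∈ Set.Ioc 0 b, (a : ℤ) * r ≡ n [ZMOD b] ∧
      sawtooth (a' * n / b) = r / b - 1 / 2 - dvdIndicator b n / 2 := by
  obtain ⟨r, hr, hmod⟩ := exists_mem_Ioc_modEq hb (a' * n)
  refine ⟨r, hr, ?_, ?_⟩
  · calc (a : ℤ) * r ≡ a * (a' * n) [ZMOD b] := hmod.symm.mul_left a
      _ = a * a' * n := by ring
      _ ≡ 1 * n [ZMOD b] := ha'.mul_right n
      _ = n := one_mul _
  · have hsaw := sawtooth_div_eq_of_modEq_of_le hmod (Nat.cast_pos.2 hr.1) (Nat.cast_le.2 hr.2)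
    rwa [dvdIndicator_mul_of_isCoprime (isCoprime_right_of_mul_modEq_one ha'), Int.cast_mul,
      Int.cast_natCast, Int.cast_natCast] at hsaw

theorem sawtooth_add_sawtooth_eq_sub_posRepCount (ha : 0 < a) (hb : 0 < b) (hab : a.Coprime b)
    {n : ℕ} (hn : 0 < n) {a' b' : ℤ} (ha' : (a : ℤ) * a' ≡ 1 [ZMOD b])
    (hb' : (b : ℤ) * b' ≡ 1 [ZMOD a]) :
    sawtooth (a' * n / b) + sawtooth (b' * n / a) =
      n / (a * b) - posRepCount a b n - (dvdIndicator a n + dvdIndicator b n) / 2 := by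
  obtain ⟨x₀, hx₀, hx₀n, hsaw_b⟩ := exists_representative_mul_inv hb ha' n
  obtain ⟨y₀, hy₀, hy₀n, hsaw_a⟩ := exists_representative_mul_inv ha hb' n
  obtain ⟨N, hN⟩ := exists_add_mul_eq_add hab hn hx₀.2 hy₀.2 hx₀n hy₀n
  rw [posRepCount_eq_of_add_eq hab hx₀ hy₀ hN, hsaw_b, hsaw_a]
  have hNQ : (a * x₀ + b * y₀ + N * (a * b) : ℚ) = n + a * b := by exact_mod_cast hN
  field_simp
  linear_combination 2 * hNQ

end Popoviciu

theorem rademacherSum_one_reciprocity {a b : ℕ} (ha : 0 < a) (hb : 0 < b) (hab : a.Coprime b)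
    {a' b' : ℤ} (ha' : (a : ℤ) * a' ≡ 1 [ZMOD b]) (hb' : (b : ℤ) * b' ≡ 1 [ZMOD a]) :
    rademacherSum 1 a b + rademacherSum 1 b a =
      1 / 12 * ((b : ℚ) / a + a / b + 1 / (a * b)) - 1 / 4
        + (sawtooth (a' / b) + sawtooth (b' / a)) / 2 := by
  have hr_ab := rademacherSum_succ hb ha' 0
  have hr_ba := rademacherSum_succ ha hb' 0
  simp only [Nat.cast_zero, mul_zero, zero_div, sawtooth_zero, zero_add, mul_one] at hr_ab hr_ba
  linear_combination hr_ab + hr_ba + dedekindSum_reciprocity ha hb hab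

theorem rademacherSum_reciprocity_general (a b : ℕ) (ha : 0 < a) (hb : 0 < b)
    (hab : Nat.Coprime a b) (n : ℕ) (hn1 : 1 ≤ n)
    (a' b' : ℤ) (ha' : (a : ℤ) * a' ≡ 1 [ZMOD (b : ℤ)])
    (hb' : (b : ℤ) * b' ≡ 1 [ZMOD (a : ℤ)]) :
    rademacherSum n a b + rademacherSum n b a =
      (n : ℚ) ^ 2 / (2 * a * b)
        - ((n : ℚ) / 2) * (1 / a + 1 / b + 1 / (a * b))
        + (1 / 12) * ((b : ℚ) / a + (a : ℚ) / b + 1 / (a * b))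
        + (1 / 2) * (sawtooth ((a' : ℚ) * n / b) + sawtooth ((b' : ℚ) * n / a)
            + sawtooth ((n : ℚ) / a) + sawtooth ((n : ℚ) / b))
        + (1 / 4) * (1 + (if a ∣ n then (1 : ℚ) else 0)
            + (if b ∣ n then (1 : ℚ) else 0))
        - ∑ m ∈ range n, (posRepCount a b m : ℚ) := by
  have hχ (m k : ℕ) : (if m ∣ k then (1 : ℚ) else 0) = dvdIndicator m k := by
    simp only [dvdIndicator, Int.natCast_dvd_natCast]
  simp only [hχ]
  induction n, hn1 using Nat.le_induction with
  | base =>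
    have hsaw_a := sawtooth_succ_div ha 0
    have hsaw_b := sawtooth_succ_div hb 0
    have hχ_zero (m : ℕ) : dvdIndicator m 0 = 1 := by simp [dvdIndicator]
    simp only [Int.cast_zero, zero_div, sawtooth_zero, zero_add, hχ_zero] at hsaw_a hsaw_b
    simp only [Nat.cast_one, mul_one, sum_range_one, posRepCount_eq_zero (Nat.add_pos_left ha b),
      Nat.cast_zero]
    linear_combination rademacherSum_one_reciprocity ha hb hab ha' hb' - hsaw_a / 2 - hsaw_b / 2
  | succ n hn ih =>
    have hr_ab := rademacherSum_succ hb ha' n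
    have hr_ba := rademacherSum_succ ha hb' n
    have hsaw_a := sawtooth_succ_div ha n
    have hsaw_b := sawtooth_succ_div hb n
    have hpop := sawtooth_add_sawtooth_eq_sub_posRepCount ha hb hab hn ha' hb'
    rw [sum_range_succ]
    push_cast at hsaw_a hsaw_b ⊢
    linear_combination ih + hr_ab + hr_ba - hsaw_a / 2 - hsaw_b / 2 + hpop

lemma sum_range_posRepCount_eq_zero {a b n : ℕ} (hn : n ≤ a + b) :
    ∑ m ∈ range n, (posRepCount a b m : ℚ) = 0 :=
  sum_eq_zero fun m hm ↦ by
    rw [posRepCount_eq_zero ((mem_range.1 hm).trans_le hn), Nat.cast_zero]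

theorem rademacherSum_reciprocity (a b : ℕ) (ha : 0 < a) (hb : 0 < b)
    (hab : Nat.Coprime a b) (n : ℕ) (hn1 : 1 ≤ n) (hn2 : n ≤ a + b)
    (a' b' : ℤ) (ha' : (a : ℤ) * a' ≡ 1 [ZMOD (b : ℤ)])
    (hb' : (b : ℤ) * b' ≡ 1 [ZMOD (a : ℤ)]) :
    rademacherSum n a b + rademacherSum n b a =
      (n : ℚ) ^ 2 / (2 * a * b)
        - ((n : ℚ) / 2) * (1 / a + 1 / b + 1 / (a * b))
        + (1 / 12) * ((b : ℚ) / a + (a : ℚ) / b + 1 / (a * b))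
        + (1 / 2) * (sawtooth ((a' : ℚ) * n / b) + sawtooth ((b' : ℚ) * n / a)
            + sawtooth ((n : ℚ) / a) + sawtooth ((n : ℚ) / b))
        + (1 / 4) * (1 + (if a ∣ n then (1 : ℚ) else 0)
            + (if b ∣ n then (1 : ℚ) else 0)) := by
  rw [rademacherSum_reciprocity_general a b ha hb hab n hn1 a' b' ha' hb',
    sum_range_posRepCount_eq_zero hn2, sub_zero]
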